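/- Let (V, w, d) be a finite weighted metric space, k ≥ 1 an integer, and for nonempty S ⊆ V and U ⊆ V define the k-means cost cost(S, U) = ∑_{x∈U} w(x)·(min_{y∈S} d(x,y))². Let OPT_k(X) := min over S ⊆ X with |S| = k of cost(S, X) and OPT_k(V) := min over S ⊆ V with |S| = k of cost(S, V). If Q is a partition of V into nonempty parts each of size at least k, then ∑_{X ∈ Q} OPT_k(X) ≤ 8·OPT_k(V). -/

import Mathlib

/-!
Fix a set `S` of `k` centers in `V` and a part `X`. Replacing each `s ∈ S` by a point of `X` nearest
to `s` at most doubles distances to the centers: if `s` is the center nearest to `x ∈ X` and `p s` is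
its replacement, then `dist s (p s) ≤ dist s x`, so `dist x (p s) ≤ 2 * dist x s`. The replacements
number at most `k`; adding points of `X` to reach exactly `k` does not increase the cost. Hence
`kOPT2 w k X X ≤ 4 * kCost2 w S X` (`kOPT2_le_four_mul_kCost2`), and summing over the parts gives the
bound, even with the constant `4`.
-/

open Finset

/-- Distance from a point to a (nonempty) finite set: `min_{y ∈ S} d(x,y)`. -/
noncomputable def distToSet {V : Type*} [MetricSpace V] (x : V) (S : Finset V) : ℝ :=
  sInf ((fun y => dist x y) '' ↑S)

/-- `k`-means cost of a center set `S` with respect to the point set `U`: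
`∑_{x ∈ U} w(x) · d(x, S)²`. -/
noncomputable def kCost2 {V : Type*} [MetricSpace V] (w : V → NNReal) (S U : Finset V) : ℝ :=
  ∑ x ∈ U, (w x : ℝ) * (distToSet x S) ^ 2

/-- `OPT_k(U, X)` for `k`-means: minimum over `S ⊆ X` with `|S| = k` of `kCost2 w S U`. -/
noncomputable def kOPT2 {V : Type*} [MetricSpace V] (w : V → NNReal) (k : ℕ) (U X : Finset V) : ℝ :=
  sInf {c : ℝ | ∃ S : Finset V, S ⊆ X ∧ S.card = k ∧ c = kCost2 w S U}

theorem distToSet_nonneg {V : Type*} [MetricSpace V] (x : V) (S : Finset V) :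
    0 ≤ distToSet x S := by
  apply Real.sInf_nonneg
  rintro _ ⟨y, -, rfl⟩
  exact dist_nonneg

theorem distToSet_le {V : Type*} [MetricSpace V] (x : V) {S : Finset V} {y : V} (hy : y ∈ S) :
    distToSet x S ≤ dist x y :=
  csInf_le (S.finite_toSet.image _).bddBelow ⟨y, hy, rfl⟩

theorem exists_distToSet_eq {V : Type*} [MetricSpace V] (x : V) {S : Finset V}
    (hS : S.Nonempty) : ∃ y ∈ S, distToSet x S = dist x y := by
  obtain ⟨y, hy, h⟩ := Set.Nonempty.csInf_mem (Set.Nonempty.image (fun y => dist x y) hS)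
    (S.finite_toSet.image _)
  exact ⟨y, hy, h.symm⟩

theorem kCost2_nonneg {V : Type*} [MetricSpace V] (w : V → NNReal) (S U : Finset V) :
    0 ≤ kCost2 w S U :=
  Finset.sum_nonneg fun x _ => mul_nonneg (w x).2 (sq_nonneg _)

theorem kOPT2_nonneg {V : Type*} [MetricSpace V] (w : V → NNReal) (k : ℕ) (U X : Finset V) :
    0 ≤ kOPT2 w k U X := by
  apply Real.sInf_nonneg
  rintro _ ⟨S, -, -, rfl⟩
  exact kCost2_nonneg w S U

theorem kOPT2_le_kCost2 {V : Type*} [MetricSpace V] (w : V → NNReal) {k : ℕ} (U : Finset V)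
    {X S : Finset V} (hS : S ⊆ X) (hc : S.card = k) : kOPT2 w k U X ≤ kCost2 w S U := by
  refine csInf_le ⟨0, ?_⟩ ⟨S, hS, hc, rfl⟩
  rintro _ ⟨T, -, -, rfl⟩
  exact kCost2_nonneg w T U

/-- Forcing the centers to lie in `X` costs at most a factor `4` compared with arbitrary centers. -/
theorem kOPT2_le_four_mul_kCost2 {V : Type*} [MetricSpace V] [DecidableEq V] (w : V → NNReal)
    {k : ℕ} {X S : Finset V} (hX : X.Nonempty) (hk : k ≤ X.card) (hS : S.Nonempty)
    (hc : S.card = k) : kOPT2 w k X X ≤ 4 * kCost2 w S X := by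
  choose p hpX hp using fun s : V => exists_distToSet_eq s hX
  have hsub : S.image p ⊆ X := Finset.image_subset_iff.2 fun s _ => hpX s
  obtain ⟨T, hpT, hTX, hTc⟩ :=
    Finset.exists_subsuperset_card_eq hsub (Finset.card_image_le.trans hc.le) hk
  refine (kOPT2_le_kCost2 w X hTX hTc).trans ?_
  unfold kCost2
  rw [Finset.mul_sum]
  refine Finset.sum_le_sum fun x hx => ?_
  obtain ⟨s, hs, hxs⟩ := exists_distToSet_eq x hS
  have hps : dist s (p s) ≤ dist x s := by
    rw [← hp s, dist_comm x s]
    exact distToSet_le s hx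
  have h2 : distToSet x T ≤ 2 * distToSet x S := by
    have h := distToSet_le x (hpT (Finset.mem_image_of_mem p hs))
    have := dist_triangle x s (p s)
    linarith
  calc (w x : ℝ) * distToSet x T ^ 2 ≤ (w x : ℝ) * (2 * distToSet x S) ^ 2 := by
        have := distToSet_nonneg x T
        gcongr
    _ = 4 * ((w x : ℝ) * distToSet x S ^ 2) := by ring

/-- For a partition `Q` of `V` into nonempty parts of size at least `k`,
`∑_{X ∈ Q} OPT_k(X) ≤ 8 · OPT_k(V)` for the `k`-means objective. -/
theorem sum_opt_parts_le_eight_opt_kmeans {V : Type*} [Fintype V] [MetricSpace V] [DecidableEq V]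
    (w : V → NNReal) (k : ℕ) (hk : 1 ≤ k)
    (Q : Finset (Finset V))
    (hdisj : (Q : Set (Finset V)).PairwiseDisjoint id)
    (hunion : Q.biUnion id = Finset.univ)
    (hne : ∀ X ∈ Q, X.Nonempty)
    (hsize : ∀ X ∈ Q, k ≤ X.card) :
    ∑ X ∈ Q, kOPT2 w k X X ≤ 8 * kOPT2 w k Finset.univ Finset.univ := by
  rcases Q.eq_empty_or_nonempty with rfl | ⟨X₀, hX₀⟩
  · simpa using kOPT2_nonneg w k Finset.univ Finset.univ
  -- A part has at least `k` points, so the infimum defining the right-hand side is not over `∅`.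
  obtain ⟨S₀, -, hS₀⟩ := Finset.exists_subset_card_eq (hsize X₀ hX₀)
  have key : (∑ X ∈ Q, kOPT2 w k X X) / 4 ≤ kOPT2 w k Finset.univ Finset.univ := by
    refine le_csInf ⟨_, S₀, Finset.subset_univ _, hS₀, rfl⟩ ?_
    rintro _ ⟨S, -, hc, rfl⟩
    have hS : S.Nonempty := Finset.card_pos.1 (by omega)
    have hsum : kCost2 w S Finset.univ = ∑ X ∈ Q, kCost2 w S X := by
      rw [← hunion]
      exact Finset.sum_biUnion hdisj
    have hle : ∑ X ∈ Q, kOPT2 w k X X ≤ ∑ X ∈ Q, 4 * kCost2 w S X :=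
      Finset.sum_le_sum fun X hX => kOPT2_le_four_mul_kCost2 w (hne X hX) (hsize X hX) hS hc
    rw [← Finset.mul_sum, ← hsum] at hle
    linarith
  have := kOPT2_nonneg w k (Finset.univ : Finset V) Finset.univ
  linarith
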